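/- Suppose the discount function satisfies δ(i)δ(j) ≤ δ(i+j) for all i,j ∈ ℕ. Then 𝕏_∞ := ∩_{n=1}^∞ Θⁿ(𝕏) is an equilibrium, i.e. Θ(𝕏_∞) = 𝕏_∞; in particular, at least one equilibrium exists. -/

import Mathlib

/-!
Suppose `R ⊆ S` and at every `y ∈ S \ R` continuing to `S` is at least as good as stopping, that is
`f y ≤ J(y, ρ(y,S))`. Then `J(x, ρ(x,S)) ≤ J(x, ρ(x,R))` for every `x`
(`valJ_le_valJ`): whenever the chain enters `S` outside `R`, replacing the reward by the value of
continuing to the next visit of `S` does not hurt, since `δ(i) δ(j) ≤ δ(i+j)`, and the error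
committed after `N` steps is at most `C δ(N) → 0`. Carrying the elapsed time `k` as a shift of the
discount function turns this into an induction on `N` that uses only the Markov property at time
`1` (`lintegral_shift`), so the strong Markov property is not needed.

Applied inductively with `S = S n` and `R = S (n+1) = Θ (S n)`, this shows that `S n` decreases and
`J(x, ρ(x, S n))` increases in `n`. The payoffs converge pathwise to the payoff of `⋂ S n`
(`tendsto_stopPayoff`): either the hitting times stabilise, or they tend to infinity and the
payoffs vanish with `δ`. By dominated convergence `J(x, ρ(x, S n))` increases to
`J(x, ρ(x, ⋂ S n))`, hence `Θ (⋂ S n) = ⋂ Θ (S n) = ⋂ S n`.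
-/

open MeasureTheory ProbabilityTheory Set Filter Topology
open scoped ENNReal ENat

noncomputable section

/-- The σ-algebra generated by the first `n+1` coordinates of the path space:
the natural filtration of the coordinate process at time `n`. -/
def pathSigma (𝕏 : Type*) [m : MeasurableSpace 𝕏] (n : ℕ) : MeasurableSpace (ℕ → 𝕏) :=
  ⨆ i ∈ Finset.range (n + 1), MeasurableSpace.comap (fun ω : ℕ → 𝕏 => ω i) m

/-- `Pr` is the family of laws of the time-homogeneous Markov chain with one-step
transition kernel `Q`: under `Pr x` the chain starts at `x`, and the Markov property
`Pr^x(X_{n+1} ∈ A | 𝓕_n) = Q(X_n, A)` holds. -/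
structure IsMarkovChainLaw {𝕏 : Type*} [MeasurableSpace 𝕏]
    (Pr : Kernel 𝕏 (ℕ → 𝕏)) (Q : Kernel 𝕏 𝕏) : Prop where
  start : ∀ x : 𝕏, Pr x {ω | ω 0 = x} = 1
  markov : ∀ (x : 𝕏) (n : ℕ) (B : Set (ℕ → 𝕏)), MeasurableSet[pathSigma 𝕏 n] B →
    ∀ A : Set 𝕏, MeasurableSet A →
      Pr x (B ∩ {ω | ω (n + 1) ∈ A}) = ∫⁻ ω in B, Q (ω n) A ∂(Pr x)

/-- The first hitting time `ρ(x,S) = inf {t ≥ 1 : X_t ∈ S}` along the path `ω`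
(equal to `⊤` if `S` is never reached at a time `≥ 1`). -/
def hitTime {𝕏 : Type*} (S : Set 𝕏) (ω : ℕ → 𝕏) : ℕ∞ :=
  sInf {n : ℕ∞ | ∃ t : ℕ, n = (t : ℕ∞) ∧ 1 ≤ t ∧ ω t ∈ S}

/-- The discounted payoff `δ(ρ(x,S)) f(X_{ρ(x,S)})` collected along the path `ω`,
with the convention that it vanishes when `S` is never hit. -/
def stopPayoff {𝕏 : Type*} (δ : ℕ → ℝ) (f : 𝕏 → ℝ) (S : Set 𝕏) (ω : ℕ → 𝕏) : ℝ :=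
  if hitTime S ω = ⊤ then 0
  else δ (hitTime S ω).toNat * f (ω (hitTime S ω).toNat)

/-- The objective value `J(x, ρ(x,S)) = 𝔼^x[δ(ρ(x,S)) f(X_{ρ(x,S)})]`. -/
def valJ {𝕏 : Type*} [MeasurableSpace 𝕏] (Pr : Kernel 𝕏 (ℕ → 𝕏)) (δ : ℕ → ℝ) (f : 𝕏 → ℝ)
    (S : Set 𝕏) (x : 𝕏) : ℝ :=
  ∫ ω, stopPayoff δ f S ω ∂(Pr x)

/-- The operator `Θ(S) = {x ∈ 𝕏 : f(x) ≥ J(x, ρ(x,S))}`. -/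
def Θ {𝕏 : Type*} [MeasurableSpace 𝕏] (Pr : Kernel 𝕏 (ℕ → 𝕏)) (δ : ℕ → ℝ) (f : 𝕏 → ℝ)
    (S : Set 𝕏) : Set 𝕏 :=
  {x | valJ Pr δ f S x ≤ f x}

/-- A Borel set `S ⊆ 𝕏` is an equilibrium if `Θ(S) = S`. -/
def IsEquilibrium {𝕏 : Type*} [MeasurableSpace 𝕏] (Pr : Kernel 𝕏 (ℕ → 𝕏)) (δ : ℕ → ℝ)
    (f : 𝕏 → ℝ) (S : Set 𝕏) : Prop :=
  MeasurableSet S ∧ Θ Pr δ f S = S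

/-- The value `V(x,S) = max (f x) (J(x, ρ(x,S)))` associated with an equilibrium `S`. -/
def valV {𝕏 : Type*} [MeasurableSpace 𝕏] (Pr : Kernel 𝕏 (ℕ → 𝕏)) (δ : ℕ → ℝ) (f : 𝕏 → ℝ)
    (S : Set 𝕏) (x : 𝕏) : ℝ :=
  max (f x) (valJ Pr δ f S x)

/-! ### Hitting times along a path -/

theorem hitTime_eq_coe {𝕏 : Type*} {S : Set 𝕏} {ω : ℕ → 𝕏} {n : ℕ} (h1 : 1 ≤ n) (hn : ω n ∈ S)
    (hlt : ∀ t, 1 ≤ t → t < n → ω t ∉ S) : hitTime S ω = n := by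
  apply le_antisymm
  · exact sInf_le ⟨n, rfl, h1, hn⟩
  · refine le_sInf ?_
    rintro _ ⟨t, rfl, ht1, htS⟩
    by_contra hcon
    exact hlt t ht1 (by exact_mod_cast not_le.mp hcon) htS

theorem hitTime_eq_top {𝕏 : Type*} {S : Set 𝕏} {ω : ℕ → 𝕏} (h : ∀ t, 1 ≤ t → ω t ∉ S) :
    hitTime S ω = ⊤ := by
  refine sInf_eq_top.mpr ?_
  rintro _ ⟨t, rfl, ht1, htS⟩
  exact absurd htS (h t ht1)

/-- A path either avoids `S` at all times `≥ 1`, or has a first time `≥ 1` in `S`. -/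
theorem hit_cases {𝕏 : Type*} (S : Set 𝕏) (ω : ℕ → 𝕏) :
    (∀ t, 1 ≤ t → ω t ∉ S) ∨
      ∃ n, 1 ≤ n ∧ ω n ∈ S ∧ ∀ t, 1 ≤ t → t < n → ω t ∉ S := by
  classical
  by_cases h : ∃ t, 1 ≤ t ∧ ω t ∈ S
  · right
    refine ⟨Nat.find h, (Nat.find_spec h).1, (Nat.find_spec h).2, fun t ht1 ht hS => ?_⟩
    exact Nat.find_min h ht ⟨ht1, hS⟩
  · left
    intro t ht hS
    exact h ⟨t, ht, hS⟩

theorem stopPayoff_of_avoid {𝕏 : Type*} (d : ℕ → ℝ) (f : 𝕏 → ℝ) {S : Set 𝕏} {ω : ℕ → 𝕏}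
    (h : ∀ t, 1 ≤ t → ω t ∉ S) : stopPayoff d f S ω = 0 := by
  simp [stopPayoff, hitTime_eq_top h]

theorem stopPayoff_of_hit {𝕏 : Type*} (d : ℕ → ℝ) (f : 𝕏 → ℝ) {S : Set 𝕏} {ω : ℕ → 𝕏} {n : ℕ}
    (h1 : 1 ≤ n) (hn : ω n ∈ S) (hlt : ∀ t, 1 ≤ t → t < n → ω t ∉ S) :
    stopPayoff d f S ω = d n * f (ω n) := by
  simp [stopPayoff, hitTime_eq_coe h1 hn hlt]

theorem stopPayoff_nonneg {𝕏 : Type*} {d : ℕ → ℝ} {f : 𝕏 → ℝ} (hf : ∀ x, 0 ≤ f x)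
    (hd : ∀ k, 0 ≤ d k) (S : Set 𝕏) (ω : ℕ → 𝕏) : 0 ≤ stopPayoff d f S ω := by
  unfold stopPayoff
  split_ifs
  · exact le_rfl
  · exact mul_nonneg (hd _) (hf _)

theorem stopPayoff_le_of_avoid {𝕏 : Type*} {d : ℕ → ℝ} {f : 𝕏 → ℝ} {C : ℝ} (hf : ∀ x, 0 ≤ f x)
    (hC : ∀ x, f x ≤ C) (hd : ∀ k, 0 ≤ d k) (hanti : Antitone d) (S : Set 𝕏) (ω : ℕ → 𝕏) (K : ℕ)
    (hK : ∀ t, 1 ≤ t → t < K → ω t ∉ S) : stopPayoff d f S ω ≤ d K * C := by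
  have hC0 : 0 ≤ C := (hf (ω 0)).trans (hC _)
  rcases hit_cases S ω with h | ⟨n, h1, hn, hlt⟩
  · rw [stopPayoff_of_avoid d f h]
    exact mul_nonneg (hd _) hC0
  · rw [stopPayoff_of_hit d f h1 hn hlt]
    have hKn : K ≤ n := by
      by_contra hcon
      exact hK n h1 (not_le.mp hcon) hn
    exact mul_le_mul (hanti hKn) (hC _) (hf _) (hd _)

theorem stopPayoff_le_const {𝕏 : Type*} {d : ℕ → ℝ} {f : 𝕏 → ℝ} {C : ℝ} (hf : ∀ x, 0 ≤ f x)
    (hC : ∀ x, f x ≤ C) (hd : ∀ k, d k ∈ Set.Icc (0 : ℝ) 1) (S : Set 𝕏) (ω : ℕ → 𝕏) :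
    stopPayoff d f S ω ≤ C := by
  have hC0 : 0 ≤ C := (hf (ω 0)).trans (hC _)
  unfold stopPayoff
  split_ifs
  · exact hC0
  · calc _ ≤ 1 * C := mul_le_mul (hd _).2 (hC _) (hf _) zero_le_one
      _ = C := one_mul C

/-- The payoff as a function of the path from time `1` on: stop at once if that path starts in `S`,
otherwise continue with the discount function moved by one unit of time. -/
def stepPayoff {𝕏 : Type*} (d : ℕ → ℝ) (f : 𝕏 → ℝ) (S : Set 𝕏) (η : ℕ → 𝕏) : ℝ :=
  open Classical in
  if η 0 ∈ S then d 1 * f (η 0) else stopPayoff (fun k => d (k + 1)) f S η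

theorem stopPayoff_eq_stepPayoff {𝕏 : Type*} (d : ℕ → ℝ) (f : 𝕏 → ℝ) (S : Set 𝕏) (ω : ℕ → 𝕏) :
    stopPayoff d f S ω = stepPayoff d f S (fun n => ω (n + 1)) := by
  unfold stepPayoff
  split_ifs with h0
  · exact stopPayoff_of_hit d f le_rfl h0 (fun t h1 h2 => by omega)
  · rcases hit_cases S (fun n => ω (n + 1)) with h | ⟨n, h1, hn, hlt⟩
    · rw [stopPayoff_of_avoid _ f h]
      refine stopPayoff_of_avoid d f fun t ht => ?_
      obtain ⟨s, rfl⟩ : ∃ s, t = s + 1 := ⟨t - 1, by omega⟩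
      rcases Nat.eq_zero_or_pos s with rfl | hs
      · exact h0
      · exact h s hs
    · rw [stopPayoff_of_hit _ f h1 hn hlt]
      refine stopPayoff_of_hit d f (by omega) hn fun t ht htn => ?_
      obtain ⟨s, rfl⟩ : ∃ s, t = s + 1 := ⟨t - 1, by omega⟩
      rcases Nat.eq_zero_or_pos s with rfl | hs
      · exact h0
      · exact hlt s hs (by omega)

/-- Pathwise continuity of the payoff from above: along decreasing sets the first hitting time
either becomes constant or tends to infinity, and in the latter case `δ` kills the payoff. -/
theorem tendsto_stopPayoff {𝕏 : Type*} {d : ℕ → ℝ} {f : 𝕏 → ℝ} {C : ℝ} (hf : ∀ x, 0 ≤ f x)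
    (hC : ∀ x, f x ≤ C) (hd : ∀ k, d k ∈ Set.Icc (0 : ℝ) 1) (hanti : Antitone d)
    (hlim : Tendsto d atTop (𝓝 0)) {S : ℕ → Set 𝕏} (hS : Antitone S) (ω : ℕ → 𝕏) :
    Tendsto (fun m => stopPayoff d f (S m) ω) atTop (𝓝 (stopPayoff d f (⋂ m, S m) ω)) := by
  have hev : ∀ K, (∀ t, 1 ≤ t → t < K → ω t ∉ ⋂ m, S m) →
      ∀ᶠ m in atTop, ∀ t, 1 ≤ t → t < K → ω t ∉ S m := by
    intro K hK
    have : ∀ᶠ m in atTop, ∀ t ∈ Finset.Ico 1 K, ω t ∉ S m := by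
      rw [Finset.eventually_all]
      intro t ht
      have ht' := Finset.mem_Ico.mp ht
      obtain ⟨m, hm⟩ : ∃ m, ω t ∉ S m := by
        simpa using hK t ht'.1 ht'.2
      filter_upwards [eventually_ge_atTop m] with k hk hmem
      exact hm (hS hk hmem)
    filter_upwards [this] with m hm t h1 h2
    exact hm t (Finset.mem_Ico.mpr ⟨h1, h2⟩)
  rcases hit_cases (⋂ m, S m) ω with h | ⟨n, h1, hn, hlt⟩
  · rw [stopPayoff_of_avoid d f h]
    have hCd : Tendsto (fun K => d K * C) atTop (𝓝 0) := by
      simpa using hlim.mul_const C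
    rw [tendsto_order]
    refine ⟨fun a ha => Eventually.of_forall fun m =>
      ha.trans_le (stopPayoff_nonneg hf (fun k => (hd k).1) _ _), fun a ha => ?_⟩
    obtain ⟨K, hK⟩ := (hCd.eventually (gt_mem_nhds ha)).exists
    filter_upwards [hev K fun t ht _ => h t ht] with m hm
    exact (stopPayoff_le_of_avoid hf hC (fun k => (hd k).1) hanti _ _ K hm).trans_lt hK
  · refine tendsto_const_nhds.congr' ?_
    filter_upwards [hev n hlt] with m hm
    rw [stopPayoff_of_hit d f h1 hn hlt, stopPayoff_of_hit d f h1 (mem_iInter.mp hn m) hm]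

/-! ### Measurability -/

theorem measurable_hitTime {𝕏 : Type*} [MeasurableSpace 𝕏] {S : Set 𝕏} (hS : MeasurableSet S) :
    Measurable (hitTime S) := by
  have hmem : ∀ t : ℕ, MeasurableSet {ω : ℕ → 𝕏 | ω t ∈ S} := fun t => measurable_pi_apply t hS
  refine measurable_to_countable' fun k => ?_
  induction k using ENat.recTopCoe with
  | top =>
    have : hitTime S ⁻¹' {⊤} = ⋂ t : ℕ, ⋂ _ : 1 ≤ t, {ω : ℕ → 𝕏 | ω t ∈ S}ᶜ := by
      ext ω
      simp only [mem_preimage, mem_singleton_iff, mem_iInter, mem_compl_iff, mem_ofPred_eq]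
      refine ⟨fun h t ht hS => ?_, hitTime_eq_top⟩
      have := sInf_eq_top.mp h _ ⟨t, rfl, ht, hS⟩
      exact ENat.natCast_ne_top t this
    rw [this]
    exact MeasurableSet.iInter fun t => MeasurableSet.iInter fun _ => (hmem t).compl
  | coe n =>
    have : hitTime S ⁻¹' {(n : ℕ∞)} = {ω : ℕ → 𝕏 | 1 ≤ n} ∩ {ω : ℕ → 𝕏 | ω n ∈ S} ∩
        ⋂ t : ℕ, ⋂ _ : 1 ≤ t, ⋂ _ : t < n, {ω : ℕ → 𝕏 | ω t ∈ S}ᶜ := by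
      ext ω
      simp only [mem_preimage, mem_singleton_iff, mem_iInter, mem_compl_iff, mem_ofPred_eq,
        mem_inter_iff]
      refine ⟨fun h => ?_, fun h => hitTime_eq_coe h.1.1 h.1.2 h.2⟩
      rcases hit_cases S ω with h' | ⟨k, h1, hk, hlt⟩
      · rw [hitTime_eq_top h'] at h
        exact absurd h.symm (ENat.natCast_ne_top n)
      · rw [hitTime_eq_coe h1 hk hlt] at h
        obtain rfl : k = n := by exact_mod_cast h
        exact ⟨⟨h1, hk⟩, hlt⟩
    rw [this]
    exact ((MeasurableSet.const _).inter (hmem n)).inter <| MeasurableSet.iInter fun t =>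
      MeasurableSet.iInter fun _ => MeasurableSet.iInter fun _ => (hmem t).compl

theorem measurable_stopPayoff {𝕏 : Type*} [MeasurableSpace 𝕏] (d : ℕ → ℝ) (f : 𝕏 → ℝ)
    (hf : Measurable f) {S : Set 𝕏} (hS : MeasurableSet S) : Measurable (stopPayoff d f S) := by
  have h := measurable_hitTime hS
  have hF : Measurable fun p : (ℕ → 𝕏) × ℕ∞ =>
      if p.2 = ⊤ then (0 : ℝ) else d p.2.toNat * f (p.1 p.2.toNat) := by
    refine measurable_from_prod_countable_left fun k => ?_
    by_cases hk : k = ⊤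
    · simp [hk]
    · simp only [hk, if_false]
      exact (hf.comp (measurable_pi_apply _)).const_mul _
  exact hF.comp (measurable_id.prodMk h)

theorem measurable_stepPayoff {𝕏 : Type*} [MeasurableSpace 𝕏] (d : ℕ → ℝ) (f : 𝕏 → ℝ)
    (hf : Measurable f) {S : Set 𝕏} (hS : MeasurableSet S) : Measurable (stepPayoff d f S) := by
  classical
  unfold stepPayoff
  exact Measurable.ite (measurable_pi_apply 0 hS)
    ((hf.comp (measurable_pi_apply 0)).const_mul _) (measurable_stopPayoff _ f hf hS)

theorem measurableSet_Θ {𝕏 : Type*} [MeasurableSpace 𝕏] (Pr : Kernel 𝕏 (ℕ → 𝕏))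
    [IsMarkovKernel Pr] (d : ℕ → ℝ) (f : 𝕏 → ℝ) (hf : Measurable f) {S : Set 𝕏}
    (hS : MeasurableSet S) : MeasurableSet (Θ Pr d f S) := by
  refine measurableSet_le ?_ hf
  exact ((measurable_stopPayoff d f hf hS).stronglyMeasurable.integral_kernel).measurable

/-! ### The Markov property at time one -/

/-- The cylinder of paths with `ω i ∈ A i` for all `i ≤ n`. -/
def box {𝕏 : Type*} (A : ℕ → Set 𝕏) (n : ℕ) : Set (ℕ → 𝕏) := {ω | ∀ i ≤ n, ω i ∈ A i}

theorem measurableSet_box {𝕏 : Type*} [MeasurableSpace 𝕏] {A : ℕ → Set 𝕏}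
    (hA : ∀ i, MeasurableSet (A i)) (n : ℕ) : MeasurableSet (box A n) := by
  have : box A n = ⋂ i : ℕ, ⋂ _ : i ≤ n, (fun ω : ℕ → 𝕏 => ω i) ⁻¹' A i := by
    ext ω; simp [box]
  rw [this]
  exact MeasurableSet.iInter fun i => MeasurableSet.iInter fun _ => measurable_pi_apply i (hA i)

theorem measurableSet_pathSigma {𝕏 : Type*} [m : MeasurableSpace 𝕏] {n i : ℕ} (hi : i ≤ n)
    {A : Set 𝕏} (hA : MeasurableSet A) :
    MeasurableSet[pathSigma 𝕏 n] ((fun ω : ℕ → 𝕏 => ω i) ⁻¹' A) := by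
  have hle : MeasurableSpace.comap (fun ω : ℕ → 𝕏 => ω i) m ≤ pathSigma 𝕏 n :=
    le_iSup₂_of_le i (Finset.mem_range.mpr (by omega)) le_rfl
  exact hle _ ⟨A, hA, rfl⟩

theorem measurableSet_pathSigma_box_shift {𝕏 : Type*} [MeasurableSpace 𝕏] {A : ℕ → Set 𝕏}
    (hA : ∀ i, MeasurableSet (A i)) (n : ℕ) :
    MeasurableSet[pathSigma 𝕏 (n + 1)] {ω : ℕ → 𝕏 | (fun k => ω (k + 1)) ∈ box A n} := by
  have : {ω : ℕ → 𝕏 | (fun k => ω (k + 1)) ∈ box A n} =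
      ⋂ i : ℕ, ⋂ _ : i ≤ n, (fun ω : ℕ → 𝕏 => ω (i + 1)) ⁻¹' A i := by
    ext ω; simp [box]
  rw [this]
  exact MeasurableSet.iInter fun i => MeasurableSet.iInter fun hi =>
    measurableSet_pathSigma (by omega) (hA i)

theorem measurableSet_pathSigma_box {𝕏 : Type*} [MeasurableSpace 𝕏] {A : ℕ → Set 𝕏}
    (hA : ∀ i, MeasurableSet (A i)) (n : ℕ) : MeasurableSet[pathSigma 𝕏 n] (box A n) := by
  have : box A n = ⋂ i : ℕ, ⋂ _ : i ≤ n, (fun ω : ℕ → 𝕏 => ω i) ⁻¹' A i := by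
    ext ω; simp [box]
  rw [this]
  exact MeasurableSet.iInter fun i => MeasurableSet.iInter fun hi =>
    measurableSet_pathSigma hi (hA i)

/-- `μ` has one-step transitions `Q` on cylinders. This is a Markov property for an arbitrary
initial law, weak enough to be checked easily and strong enough to determine `μ`. -/
def CylMarkov {𝕏 : Type*} [MeasurableSpace 𝕏] (Q : Kernel 𝕏 𝕏) (μ : Measure (ℕ → 𝕏)) : Prop :=
  ∀ A : ℕ → Set 𝕏, (∀ i, MeasurableSet (A i)) → ∀ n : ℕ, ∀ D : Set 𝕏, MeasurableSet D →
    μ (box A n ∩ {ω | ω (n + 1) ∈ D}) = ∫⁻ ω in box A n, Q (ω n) D ∂μ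

theorem CylMarkov.lintegral {𝕏 : Type*} [MeasurableSpace 𝕏] {Q : Kernel 𝕏 𝕏}
    {μ : Measure (ℕ → 𝕏)} (h : CylMarkov Q μ) {A : ℕ → Set 𝕏} (hA : ∀ i, MeasurableSet (A i))
    (n : ℕ) {g : 𝕏 → ℝ≥0∞} (hg : Measurable g) :
    ∫⁻ ω in box A n, g (ω (n + 1)) ∂μ = ∫⁻ ω in box A n, ∫⁻ y, g y ∂(Q (ω n)) ∂μ := by
  have hQ : Measurable fun ω : ℕ → 𝕏 => Q (ω n) := Q.measurable.comp (measurable_pi_apply n)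
  have hmeas : (μ.restrict (box A n)).map (fun ω => ω (n + 1)) =
      (μ.restrict (box A n)).bind fun ω => Q (ω n) := by
    ext D hD
    rw [Measure.map_apply (measurable_pi_apply _) hD, Measure.bind_apply hD hQ.aemeasurable,
      Measure.restrict_apply (measurable_pi_apply _ hD), inter_comm]
    exact h A hA n D hD
  rw [← lintegral_map hg (measurable_pi_apply (n + 1)), hmeas,
    Measure.lintegral_bind hQ.aemeasurable hg.aemeasurable]

theorem lintegral_box_succ {𝕏 : Type*} [MeasurableSpace 𝕏] (μ : Measure (ℕ → 𝕏))
    {A : ℕ → Set 𝕏} (hA : ∀ i, MeasurableSet (A i)) (n : ℕ) (g : 𝕏 → ℝ≥0∞) :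
    ∫⁻ ω in box A (n + 1), g (ω (n + 1)) ∂μ =
      ∫⁻ ω in box A n, (A (n + 1)).indicator g (ω (n + 1)) ∂μ := by
  have hbox : box A (n + 1) = (fun ω : ℕ → 𝕏 => ω (n + 1)) ⁻¹' A (n + 1) ∩ box A n := by
    ext ω
    simp only [box, mem_ofPred_eq, mem_inter_iff, mem_preimage]
    refine ⟨fun h => ⟨h _ le_rfl, fun i hi => h i (by omega)⟩, fun h i hi => ?_⟩
    rcases Nat.lt_or_ge n i with hn | hn
    · obtain rfl : i = n + 1 := by omega
      exact h.1
    · exact h.2 i hn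
  have hm : MeasurableSet ((fun ω : ℕ → 𝕏 => ω (n + 1)) ⁻¹' A (n + 1)) :=
    measurable_pi_apply _ (hA _)
  rw [hbox, ← Measure.restrict_restrict hm, ← lintegral_indicator hm]
  rfl

/-- A law on the path space is determined by its initial law and its one-step transitions. -/
theorem CylMarkov.ext {𝕏 : Type*} [MeasurableSpace 𝕏] {Q : Kernel 𝕏 𝕏}
    {μ ν : Measure (ℕ → 𝕏)} [IsProbabilityMeasure μ] [IsProbabilityMeasure ν]
    (hμ : CylMarkov Q μ) (hν : CylMarkov Q ν)
    (h0 : μ.map (fun ω => ω 0) = ν.map (fun ω => ω 0)) : μ = ν := by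
  have key : ∀ A : ℕ → Set 𝕏, (∀ i, MeasurableSet (A i)) → ∀ n, ∀ g : 𝕏 → ℝ≥0∞, Measurable g →
      ∫⁻ ω in box A n, g (ω n) ∂μ = ∫⁻ ω in box A n, g (ω n) ∂ν := by
    intro A hA n
    induction n with
    | zero =>
      intro g hg
      have hbox : box A 0 = (fun ω : ℕ → 𝕏 => ω 0) ⁻¹' A 0 := by
        ext ω; simp [box]
      rw [hbox, ← setLIntegral_map (hA 0) hg (measurable_pi_apply 0),
        ← setLIntegral_map (hA 0) hg (measurable_pi_apply 0), h0]
    | succ n ih =>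
      intro g hg
      have hg' := hg.indicator (hA (n + 1))
      rw [lintegral_box_succ μ hA, lintegral_box_succ ν hA, hμ.lintegral hA n hg',
        hν.lintegral hA n hg']
      exact ih _ (hg'.lintegral_kernel)
  refine ext_of_generate_finite _ (generateFrom_squareCylinders (α := fun _ : ℕ => 𝕏)).symm
    (isPiSystem_squareCylinders (fun _ => MeasurableSpace.isPiSystem_measurableSet)
      fun _ => MeasurableSet.univ) ?_ (by simp)
  rintro _ ⟨s, t, ht, rfl⟩
  classical
  -- A square cylinder over the finite set `s` is a box up to time `max s`, free outside `s`.
  let A : ℕ → Set 𝕏 := fun i => if i ∈ s then t i else Set.univ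
  have hA : ∀ i, MeasurableSet (A i) := by
    intro i
    by_cases hi : i ∈ s
    · simpa [A, hi] using ht i (mem_univ i)
    · simp [A, hi]
  have hbox : (s : Set ℕ).pi t = box A (s.sup id) := by
    ext ω
    simp only [Set.mem_pi, box, mem_ofPred_eq, Finset.mem_coe]
    constructor
    · intro h i _
      by_cases hi : i ∈ s
      · simpa [A, hi] using h i hi
      · simp [A, hi]
    · intro h i hi
      have := h i (Finset.le_sup (f := id) hi)
      simpa [A, hi] using this
  have := key A hA (s.sup id) (fun _ => 1) measurable_const
  rw [hbox]
  simpa using this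

theorem ae_start {𝕏 : Type*} [MeasurableSpace 𝕏] [MeasurableSingletonClass 𝕏]
    {Pr : Kernel 𝕏 (ℕ → 𝕏)} [IsMarkovKernel Pr] {Q : Kernel 𝕏 𝕏}
    (hchain : IsMarkovChainLaw Pr Q) (x : 𝕏) : ∀ᵐ ω ∂(Pr x), ω 0 = x := by
  have h0 : Measurable fun ω : ℕ → 𝕏 => ω 0 := measurable_pi_apply 0
  have hm : MeasurableSet {ω : ℕ → 𝕏 | ω 0 = x} := h0 (measurableSet_singleton x)
  exact (mem_ae_iff_prob_eq_one hm).mpr (hchain.start x)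

/-- Under `Pr x`, the path observed from time `1` on is the chain started from the law `Q x`. -/
theorem map_shift {𝕏 : Type*} [MeasurableSpace 𝕏] [MeasurableSingletonClass 𝕏]
    (Pr : Kernel 𝕏 (ℕ → 𝕏)) [IsMarkovKernel Pr] (Q : Kernel 𝕏 𝕏) [IsMarkovKernel Q]
    (hchain : IsMarkovChainLaw Pr Q) (x : 𝕏) :
    (Pr x).map (fun ω n => ω (n + 1)) = (Q x).bind Pr := by
  have hsh : Measurable fun (ω : ℕ → 𝕏) (n : ℕ) => ω (n + 1) :=
    measurable_pi_lambda _ fun n => measurable_pi_apply _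
  have hstart := ae_start hchain
  have : IsProbabilityMeasure ((Pr x).map (fun ω n => ω (n + 1))) :=
    Measure.isProbabilityMeasure_map hsh.aemeasurable
  refine CylMarkov.ext (Q := Q) ?_ ?_ ?_
  · intro A hA n D hD
    have hbox := measurableSet_box hA n
    have hnext : MeasurableSet {ω : ℕ → 𝕏 | ω (n + 1) ∈ D} :=
      measurableSet_preimage (measurable_pi_apply (n + 1)) hD
    have hQ : Measurable fun ω : ℕ → 𝕏 => Q (ω n) D :=
      (Q.measurable_coe hD).comp (measurable_pi_apply n)
    rw [Measure.map_apply hsh (hbox.inter hnext),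
      setLIntegral_map hbox hQ hsh]
    exact hchain.markov x (n + 1) _ (measurableSet_pathSigma_box_shift hA n) D hD
  · intro A hA n D hD
    have hbox := measurableSet_box hA n
    have hnext : MeasurableSet {ω : ℕ → 𝕏 | ω (n + 1) ∈ D} :=
      measurableSet_preimage (measurable_pi_apply (n + 1)) hD
    have hQ : Measurable fun ω : ℕ → 𝕏 => Q (ω n) D :=
      (Q.measurable_coe hD).comp (measurable_pi_apply n)
    rw [Measure.bind_apply (hbox.inter hnext) Pr.measurable.aemeasurable,
      ← lintegral_indicator hbox,
      Measure.lintegral_bind Pr.measurable.aemeasurable (hQ.indicator hbox).aemeasurable]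
    refine lintegral_congr fun y => ?_
    rw [lintegral_indicator hbox]
    exact hchain.markov y n _ (measurableSet_pathSigma_box hA n) D hD
  · ext D hD
    have hD0 : MeasurableSet ((fun ω : ℕ → 𝕏 => ω 0) ⁻¹' D) := measurable_pi_apply 0 hD
    rw [Measure.map_apply (measurable_pi_apply 0) hD, Measure.map_apply (measurable_pi_apply 0) hD,
      Measure.map_apply hsh hD0, Measure.bind_apply hD0 Pr.measurable.aemeasurable]
    have h1 := hchain.markov x 0 Set.univ MeasurableSet.univ D hD
    rw [univ_inter, Measure.restrict_univ] at h1
    have h2 : ∫⁻ ω, Q (ω 0) D ∂(Pr x) = Q x D := by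
      rw [lintegral_congr_ae (g := fun _ => Q x D)
        ((hstart x).mono fun ω hω => by simp only [hω])]
      simp
    have h3 : ∀ y, Pr y ((fun ω : ℕ → 𝕏 => ω 0) ⁻¹' D) = D.indicator 1 y := by
      intro y
      have : ((fun ω : ℕ → 𝕏 => ω 0) ⁻¹' D : Set (ℕ → 𝕏)) =ᵐ[Pr y] {_ω | y ∈ D} := by
        filter_upwards [hstart y] with ω hω
        change (ω 0 ∈ D) = (y ∈ D)
        rw [hω]
      rw [measure_congr this]
      by_cases hy : y ∈ D <;> simp [hy]
    calc _ = Pr x {ω | ω (0 + 1) ∈ D} := rfl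
      _ = Q x D := h1.trans h2
      _ = _ := by simp_rw [h3]; rw [lintegral_indicator_one hD]

theorem lintegral_shift {𝕏 : Type*} [MeasurableSpace 𝕏] [MeasurableSingletonClass 𝕏]
    (Pr : Kernel 𝕏 (ℕ → 𝕏)) [IsMarkovKernel Pr] (Q : Kernel 𝕏 𝕏) [IsMarkovKernel Q]
    (hchain : IsMarkovChainLaw Pr Q) (x : 𝕏) {G : (ℕ → 𝕏) → ℝ≥0∞} (hG : Measurable G) :
    ∫⁻ ω, G (fun n => ω (n + 1)) ∂(Pr x) = ∫⁻ y, ∫⁻ η, G η ∂(Pr y) ∂(Q x) := by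
  have hsh : Measurable fun (ω : ℕ → 𝕏) (n : ℕ) => ω (n + 1) :=
    measurable_pi_lambda _ fun n => measurable_pi_apply _
  rw [← lintegral_map hG hsh, map_shift Pr Q hchain x,
    Measure.lintegral_bind Pr.measurable.aemeasurable hG.aemeasurable]

/-! ### Comparison of nested stopping sets -/

/-- The objective value as an extended non-negative number, for an arbitrary discount function
`d`. -/
def extJ {𝕏 : Type*} [MeasurableSpace 𝕏] (Pr : Kernel 𝕏 (ℕ → 𝕏)) (d : ℕ → ℝ) (f : 𝕏 → ℝ)
    (S : Set 𝕏) (x : 𝕏) : ℝ≥0∞ :=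
  ∫⁻ ω, ENNReal.ofReal (stopPayoff d f S ω) ∂(Pr x)

theorem valJ_eq_toReal {𝕏 : Type*} [MeasurableSpace 𝕏] (Pr : Kernel 𝕏 (ℕ → 𝕏)) {d : ℕ → ℝ}
    {f : 𝕏 → ℝ} (hf : Measurable f) (hf0 : ∀ x, 0 ≤ f x) (hd : ∀ k, 0 ≤ d k) {S : Set 𝕏}
    (hS : MeasurableSet S) (x : 𝕏) : valJ Pr d f S x = (extJ Pr d f S x).toReal :=
  integral_eq_lintegral_of_nonneg_ae (ae_of_all _ fun ω => stopPayoff_nonneg hf0 hd S ω)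
    (measurable_stopPayoff d f hf hS).aestronglyMeasurable

theorem extJ_ne_top {𝕏 : Type*} [MeasurableSpace 𝕏] (Pr : Kernel 𝕏 (ℕ → 𝕏)) [IsMarkovKernel Pr]
    {d : ℕ → ℝ} {f : 𝕏 → ℝ} {C : ℝ} (hf0 : ∀ x, 0 ≤ f x) (hC : ∀ x, f x ≤ C)
    (hd : ∀ k, d k ∈ Set.Icc (0 : ℝ) 1) (S : Set 𝕏) (x : 𝕏) : extJ Pr d f S x ≠ ⊤ := by
  have : extJ Pr d f S x ≤ ENNReal.ofReal C := by
    calc _ ≤ ∫⁻ _, ENNReal.ofReal C ∂(Pr x) := lintegral_mono fun ω =>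
          ENNReal.ofReal_le_ofReal (stopPayoff_le_const hf0 hC hd S ω)
      _ = _ := by simp
  exact ne_top_of_le_ne_top ENNReal.ofReal_ne_top this

/-- First-step decomposition of the objective value. -/
theorem extJ_step {𝕏 : Type*} [MeasurableSpace 𝕏] [MeasurableSingletonClass 𝕏]
    (Pr : Kernel 𝕏 (ℕ → 𝕏)) [IsMarkovKernel Pr] (Q : Kernel 𝕏 𝕏) [IsMarkovKernel Q]
    (hchain : IsMarkovChainLaw Pr Q) (d : ℕ → ℝ) {f : 𝕏 → ℝ} (hf : Measurable f) {S : Set 𝕏}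
    (hS : MeasurableSet S) (x : 𝕏) :
    extJ Pr d f S x = ∫⁻ y, (open Classical in if y ∈ S then ENNReal.ofReal (d 1 * f y)
      else extJ Pr (fun k => d (k + 1)) f S y) ∂(Q x) := by
  unfold extJ
  simp_rw [stopPayoff_eq_stepPayoff d f S]
  rw [lintegral_shift Pr Q hchain x (G := fun η => ENNReal.ofReal (stepPayoff d f S η))
    (measurable_stepPayoff d f hf hS).ennreal_ofReal]
  refine lintegral_congr fun y => ?_
  rw [lintegral_congr_ae (g := fun η => open Classical in if y ∈ S then ENNReal.ofReal (d 1 * f y)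
    else ENNReal.ofReal (stopPayoff (fun k => d (k + 1)) f S η))]
  · split_ifs <;> simp
  · filter_upwards [ae_start hchain y] with η hη
    unfold stepPayoff
    rw [hη]
    split_ifs <;> rfl

/-- Decreasing impatience: discounting the value at `0` by `δ k` undervalues the reward collected
with the clock already at `k`. -/
theorem mul_extJ_le {𝕏 : Type*} [MeasurableSpace 𝕏] (Pr : Kernel 𝕏 (ℕ → 𝕏)) {δ : ℕ → ℝ}
    {f : 𝕏 → ℝ} (hf : Measurable f) (hf0 : ∀ x, 0 ≤ f x) (hδ0 : ∀ k, 0 ≤ δ k)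
    (hDI : ∀ i j : ℕ, δ i * δ j ≤ δ (i + j)) {S : Set 𝕏} (hS : MeasurableSet S) (k : ℕ) (x : 𝕏) :
    ENNReal.ofReal (δ k) * extJ Pr δ f S x ≤ extJ Pr (fun j => δ (k + j)) f S x := by
  unfold extJ
  rw [← lintegral_const_mul _ (measurable_stopPayoff δ f hf hS).ennreal_ofReal]
  refine lintegral_mono fun ω => ?_
  rw [← ENNReal.ofReal_mul (hδ0 k)]
  refine ENNReal.ofReal_le_ofReal ?_
  unfold stopPayoff
  split_ifs
  · simp
  · rw [← mul_assoc]
    exact mul_le_mul_of_nonneg_right (hDI _ _) (hf0 _)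

/-- The comparison with the clock at `k` and horizon `N`. The recursion follows `S` and `R` one step
at a time; at a point of `S \ R` the stopping reward for `S` is first replaced by the value of
continuing to `S`. -/
theorem extJ_le_add {𝕏 : Type*} [MeasurableSpace 𝕏] [MeasurableSingletonClass 𝕏]
    (Pr : Kernel 𝕏 (ℕ → 𝕏)) [IsMarkovKernel Pr] (Q : Kernel 𝕏 𝕏) [IsMarkovKernel Q]
    (hchain : IsMarkovChainLaw Pr Q) {f : 𝕏 → ℝ} (hf : Measurable f) (hf0 : ∀ x, 0 ≤ f x)
    {C : ℝ} (hC : ∀ x, f x ≤ C) {δ : ℕ → ℝ} (hδ0 : ∀ k, 0 ≤ δ k) (hδ : Antitone δ)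
    (hDI : ∀ i j : ℕ, δ i * δ j ≤ δ (i + j)) {S R : Set 𝕏} (hS : MeasurableSet S)
    (hR : MeasurableSet R) (hRS : R ⊆ S)
    (hle : ∀ y ∈ S, y ∉ R → ENNReal.ofReal (f y) ≤ extJ Pr δ f S y) (N : ℕ) :
    ∀ (k : ℕ) (x : 𝕏), extJ Pr (fun j => δ (k + j)) f S x ≤
      extJ Pr (fun j => δ (k + j)) f R x + ENNReal.ofReal (δ (k + N) * C) := by
  induction N with
  | zero =>
    intro k x
    refine le_add_left ?_
    calc _ ≤ ∫⁻ _, ENNReal.ofReal (δ (k + 0) * C) ∂(Pr x) := lintegral_mono fun ω =>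
          ENNReal.ofReal_le_ofReal (stopPayoff_le_of_avoid (d := fun j => δ (k + j)) hf0 hC
            (fun j => hδ0 _) (fun i j hij => hδ (by omega)) S ω 0 (fun t _ ht => by omega))
      _ = _ := by simp
  | succ N ih =>
    intro k x
    have hidx : (fun j => δ (k + (j + 1))) = fun j => δ (k + 1 + j) := by
      funext j; congr 1; omega
    rw [extJ_step Pr Q hchain _ hf hS, extJ_step Pr Q hchain _ hf hR, hidx]
    rw [show k + (N + 1) = k + 1 + N by omega]
    have hconst : ENNReal.ofReal (δ (k + 1 + N) * C) =
        ∫⁻ _, ENNReal.ofReal (δ (k + 1 + N) * C) ∂(Q x) := by simp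
    rw [hconst, ← lintegral_add_right _ measurable_const]
    refine lintegral_mono fun y => ?_
    by_cases hyR : y ∈ R
    · simp [hyR, hRS hyR]
    · by_cases hyS : y ∈ S
      · simp only [hyR, hyS, if_true, if_false]
        refine le_trans ?_ (ih (k + 1) y)
        rw [ENNReal.ofReal_mul (hδ0 _)]
        exact (mul_le_mul_right (hle y hyS hyR) _).trans
          (mul_extJ_le Pr hf hf0 hδ0 hDI hS (k + 1) y)
      · simp only [hyR, hyS, if_false]
        exact ih (k + 1) y

/-- Removing from `S` points at which continuing to `S` is at least as good as stopping does not
decrease the objective value. -/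
theorem valJ_le_valJ {𝕏 : Type*} [MeasurableSpace 𝕏] [MeasurableSingletonClass 𝕏]
    (Pr : Kernel 𝕏 (ℕ → 𝕏)) [IsMarkovKernel Pr] (Q : Kernel 𝕏 𝕏) [IsMarkovKernel Q]
    (hchain : IsMarkovChainLaw Pr Q) (f : 𝕏 → ℝ) (hf : Measurable f) (hf0 : ∀ x, 0 ≤ f x)
    {C : ℝ} (hC : ∀ x, f x ≤ C) (δ : ℕ → ℝ) (hδ_mem : ∀ k, δ k ∈ Set.Icc (0 : ℝ) 1)
    (hδ : Antitone δ) (hδ_lim : Tendsto δ atTop (𝓝 0))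
    (hDI : ∀ i j : ℕ, δ i * δ j ≤ δ (i + j)) {S R : Set 𝕏} (hS : MeasurableSet S)
    (hR : MeasurableSet R) (hRS : R ⊆ S) (hle : ∀ y ∈ S, y ∉ R → f y ≤ valJ Pr δ f S y) (x : 𝕏) :
    valJ Pr δ f S x ≤ valJ Pr δ f R x := by
  have hδ0 : ∀ k, 0 ≤ δ k := fun k => (hδ_mem k).1
  have hle' : ∀ y ∈ S, y ∉ R → ENNReal.ofReal (f y) ≤ extJ Pr δ f S y := by
    intro y hyS hyR
    have h := hle y hyS hyR
    rw [valJ_eq_toReal Pr hf hf0 hδ0 hS] at h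
    exact ENNReal.ofReal_le_of_le_toReal h
  rw [valJ_eq_toReal Pr hf hf0 hδ0 hS, valJ_eq_toReal Pr hf hf0 hδ0 hR]
  refine ENNReal.toReal_mono (extJ_ne_top Pr hf0 hC hδ_mem R x) ?_
  have hN : ∀ N, extJ Pr δ f S x ≤ extJ Pr δ f R x + ENNReal.ofReal (δ N * C) := by
    intro N
    have h := extJ_le_add Pr Q hchain hf hf0 hC hδ0 hδ hDI hS hR hRS hle' N 0 x
    simpa only [zero_add] using h
  have hlim : Tendsto (fun N => extJ Pr δ f R x + ENNReal.ofReal (δ N * C)) atTop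
      (𝓝 (extJ Pr δ f R x + 0)) := by
    refine tendsto_const_nhds.add ?_
    simpa using ENNReal.tendsto_ofReal (hδ_lim.mul_const C)
  rw [add_zero] at hlim
  exact ge_of_tendsto' hlim hN

/-- Under decreasing impatience, `𝕏_∞ = ⋂_{n ≥ 1} Θⁿ(𝕏)` is an equilibrium;
in particular at least one equilibrium exists. -/
theorem exists_equilibrium
    {𝕏 : Type*} [TopologicalSpace 𝕏] [PolishSpace 𝕏] [MeasurableSpace 𝕏] [BorelSpace 𝕏]
    (Pr : Kernel 𝕏 (ℕ → 𝕏)) [IsMarkovKernel Pr] (Q : Kernel 𝕏 𝕏) [IsMarkovKernel Q]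
    (hchain : IsMarkovChainLaw Pr Q)
    (f : 𝕏 → ℝ) (hf_meas : Measurable f) (hf_nonneg : ∀ x, 0 ≤ f x)
    (hf_bdd : ∃ C : ℝ, ∀ x, f x ≤ C)
    (δ : ℕ → ℝ) (hδ_mem : ∀ k, δ k ∈ Set.Icc (0 : ℝ) 1) (hδ_anti : StrictAnti δ)
    (hδ_zero : δ 0 = 1) (hδ_lim : Tendsto δ atTop (𝓝 0))
    (hDI : ∀ i j : ℕ, δ i * δ j ≤ δ (i + j))
 :
    IsEquilibrium Pr δ f (⋂ n : ℕ, (Θ Pr δ f)^[n + 1] (Set.univ : Set 𝕏)) ∧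
    ∃ S : Set 𝕏, IsEquilibrium Pr δ f S := by
  obtain ⟨C, hC⟩ := hf_bdd
  set S : ℕ → Set 𝕏 := fun n => (Θ Pr δ f)^[n] Set.univ with hSdef
  have hSsucc : ∀ n, S (n + 1) = Θ Pr δ f (S n) := fun n => by
    simp only [hSdef, Function.iterate_succ_apply']
  have hSm : ∀ n, MeasurableSet (S n) := by
    intro n
    induction n with
    | zero => simp [hSdef]
    | succ n ih =>
      rw [hSsucc]
      exact measurableSet_Θ Pr δ f hf_meas ih
  have hstep : ∀ n, S (n + 1) ⊆ S n → ∀ x, valJ Pr δ f (S n) x ≤ valJ Pr δ f (S (n + 1)) x := by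
    intro n hn x
    refine valJ_le_valJ Pr Q hchain f hf_meas hf_nonneg hC δ hδ_mem hδ_anti.antitone hδ_lim hDI (hSm n)
      (hSm (n + 1)) hn (fun y _ hy => ?_) x
    rw [hSsucc] at hy
    exact (not_le.mp hy).le
  have hsub : ∀ n, S (n + 1) ⊆ S n := by
    intro n
    induction n with
    | zero => exact subset_univ _
    | succ n ih =>
      intro x hx
      rw [hSsucc] at hx ⊢
      exact (hstep n ih x).trans hx
  have hanti : Antitone S := antitone_nat_of_succ_le hsub
  have hmono : ∀ x, Monotone fun n => valJ Pr δ f (S n) x :=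
    fun x => monotone_nat_of_le_succ fun n => hstep n (hsub n) x
  have hlim : ∀ x, Tendsto (fun n => valJ Pr δ f (S n) x) atTop
      (𝓝 (valJ Pr δ f (⋂ n, S n) x)) := by
    intro x
    refine tendsto_integral_of_dominated_convergence (fun _ => C)
      (fun n => (measurable_stopPayoff δ f hf_meas (hSm n)).aestronglyMeasurable)
      (integrable_const C) (fun n => ae_of_all _ fun ω => ?_)
      (ae_of_all _ fun ω => tendsto_stopPayoff hf_nonneg hC hδ_mem hδ_anti.antitone hδ_lim hanti ω)
    rw [Real.norm_of_nonneg (stopPayoff_nonneg hf_nonneg (fun k => (hδ_mem k).1) _ _)]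
    exact stopPayoff_le_const hf_nonneg hC hδ_mem _ _
  have hinter : (⋂ n, S (n + 1)) = ⋂ n, S n := by
    apply subset_antisymm
    · exact subset_iInter fun n => (iInter_subset _ n).trans (hsub n)
    · exact subset_iInter fun n => iInter_subset _ (n + 1)
  have key : IsEquilibrium Pr δ f (⋂ n : ℕ, S (n + 1)) := by
    refine ⟨MeasurableSet.iInter fun n => hSm (n + 1), ?_⟩
    ext x
    have hx : x ∈ (⋂ n, S (n + 1)) ↔ ∀ n, valJ Pr δ f (S n) x ≤ f x := by
      rw [mem_iInter]
      exact forall_congr' fun n => by rw [hSsucc]; rfl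
    rw [hx, hinter]
    change valJ Pr δ f (⋂ n, S n) x ≤ f x ↔ _
    exact ⟨fun h n => ((hmono x).ge_of_tendsto (hlim x) n).trans h,
      fun h => le_of_tendsto' (hlim x) h⟩
  exact ⟨key, _, key⟩

end
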